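/- Let n > 2 and let X be an n×n integer matrix. If X (viewed as a real matrix) lies in the real linear span of the set {M(g) − M(e) : g ∈ D_n}, then X is an integer linear combination of the matrices M(g) − M(e), g ∈ D_n. (That is, the lattice generated by the vertices of P(D_n) has index one in the lattice aff(P(D_n)) ∩ ℤ^{n×n}.) -/

import Mathlib

/-!
Identify `Fin n` with `ℤ/n`. The rotation by `k` is supported on the entries with `j - i = k`, and
each reflection on the entries with `i + j` constant. A matrix in the real span of the differences
`M(g) - M(e)` is therefore one of the form `X i j = c (j - i) + d (i + j)` with `∑ c + ∑ d = 0`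
(`exists_coeff_of_mem_span`), and conversely integer `c`, `d` of this kind exhibit `X` as an
integer combination of the differences (`mem_intSpan_of_coeff`).

If `X` is an integer matrix, replace `c u` by `⌊c u⌋` and `d v` by `d v + fract (c v)`. The row
`i = 0` says that `c v + d v` is an integer, so the new `d` is integer valued, and the total sum
of the coefficients does not change. The matrix does not change either: `c (j - i) + d (i + j)`
and `c (i + j) + d (i + j)` are both integers, so `c (j - i)` and `c (i + j)` have the same
fractional part. No case distinction on the parity of `n` is needed.
-/

open scoped BigOperators

/-- The permutation matrix of a permutation `g` of `Fin n`. -/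
noncomputable def permMatrix (n : ℕ) (g : Equiv.Perm (Fin n)) :
    Matrix (Fin n) (Fin n) ℝ :=
  Matrix.of fun i j => if g i = j then (1 : ℝ) else 0

/-- The dihedral group of permutations of `Fin n`, generated by the rotation
`finRotate n` and the reflection `Fin.revPerm`. -/
def dihedralSet (n : ℕ) : Set (Equiv.Perm (Fin n)) :=
  {g | ∃ k : ℕ, g = (finRotate n) ^ k ∨ g = Fin.revPerm * (finRotate n) ^ k}

section

open scoped Fin.CommRing Fin.NatCast

theorem finRotate_pow_apply (m k : ℕ) (i : Fin (m + 1)) :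
    (finRotate (m + 1) ^ k) i = i + (k : Fin (m + 1)) := by
  induction k with
  | zero => simp
  | succ k ih => rw [pow_succ', Equiv.Perm.mul_apply, ih, finRotate_apply]; push_cast; abel

theorem permMatrix_rotation (m k : ℕ) (i j : Fin (m + 1)) :
    permMatrix (m + 1) (finRotate (m + 1) ^ k) i j
      = if j - i = (k : Fin (m + 1)) then 1 else 0 := by
  simp only [permMatrix, Matrix.of_apply, finRotate_pow_apply, sub_eq_iff_eq_add']
  simp only [eq_comm]

theorem permMatrix_reflection (m k : ℕ) (i j : Fin (m + 1)) :
    permMatrix (m + 1) (Fin.revPerm * finRotate (m + 1) ^ k) i j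
      = if i + j = Fin.last m - (k : Fin (m + 1)) then 1 else 0 := by
  simp only [permMatrix, Matrix.of_apply, Equiv.Perm.mul_apply, finRotate_pow_apply,
    Fin.revPerm_apply, ← Fin.last_sub]
  congr 1
  rw [eq_iff_iff, sub_eq_iff_eq_add, eq_sub_iff_add_eq, eq_comm]
  constructor <;> intro h <;> rw [← h] <;> abel

theorem permMatrix_one_apply (m : ℕ) (i j : Fin (m + 1)) :
    permMatrix (m + 1) 1 i j = if j - i = 0 then 1 else 0 := by
  simpa using permMatrix_rotation m 0 i j

/-- The coefficient of the identity is adjusted so that the coefficients `c` of the rotations and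
`d` of the reflections sum to zero; this absorbs the terms `- M(e)`. -/
theorem exists_coeff_of_mem_span (m : ℕ) (Y : Matrix (Fin (m + 1)) (Fin (m + 1)) ℝ)
    (hY : Y ∈ Submodule.span ℝ
      ((fun g => permMatrix (m + 1) g - permMatrix (m + 1) 1) '' dihedralSet (m + 1))) :
    ∃ c d : Fin (m + 1) → ℝ, ∑ u, c u + ∑ v, d v = 0 ∧
      ∀ i j, Y i j = c (j - i) + d (i + j) := by
  induction hY using Submodule.span_induction with
  | mem x hx =>
    obtain ⟨g, ⟨k, rfl | rfl⟩, rfl⟩ := hx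
    · refine ⟨Pi.single (k : Fin (m + 1)) 1 - Pi.single 0 1, 0, by simp, fun i j => ?_⟩
      simp [permMatrix_rotation, permMatrix_one_apply, Pi.single_apply]
    · refine ⟨-Pi.single 0 1, Pi.single (Fin.last m - (k : Fin (m + 1))) 1, by simp,
        fun i j => ?_⟩
      simp only [Matrix.sub_apply, permMatrix_reflection, permMatrix_one_apply, Pi.neg_apply,
        Pi.single_apply]
      ring
  | zero => exact ⟨0, 0, by simp, by simp⟩
  | add x y _ _ hx hy =>
    obtain ⟨c, d, h, hx⟩ := hx
    obtain ⟨c', d', h', hy⟩ := hy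
    refine ⟨c + c', d + d', ?_, fun i j => ?_⟩
    · simp only [Pi.add_apply, Finset.sum_add_distrib]
      linarith
    · simp only [Matrix.add_apply, Pi.add_apply, hx, hy]
      ring
  | smul r x _ hx =>
    obtain ⟨c, d, h, hx⟩ := hx
    refine ⟨r • c, r • d, ?_, fun i j => ?_⟩
    · simp only [Pi.smul_apply, smul_eq_mul, ← Finset.mul_sum, ← mul_add, h, mul_zero]
    · simp only [Matrix.smul_apply, Pi.smul_apply, smul_eq_mul, hx, mul_add]

theorem mem_intSpan_of_coeff (m : ℕ) (Y : Matrix (Fin (m + 1)) (Fin (m + 1)) ℝ)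
    (c d : Fin (m + 1) → ℤ) (hs : ∑ u, c u + ∑ v, d v = 0)
    (hY : ∀ i j, Y i j = c (j - i) + d (i + j)) :
    Y ∈ Submodule.span ℤ
      ((fun g => permMatrix (m + 1) g - permMatrix (m + 1) 1) '' dihedralSet (m + 1)) := by
  have key : Y =
      ∑ u, c u • (permMatrix (m + 1) (finRotate (m + 1) ^ u.val) - permMatrix (m + 1) 1) +
      ∑ v, d v • (permMatrix (m + 1) (Fin.revPerm * finRotate (m + 1) ^ (Fin.last m - v).val)
        - permMatrix (m + 1) 1) := by
    simp only [smul_sub, Finset.sum_sub_distrib, ← Finset.sum_smul]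
    rw [sub_add_sub_comm, ← add_smul, hs, zero_smul, sub_zero]
    ext i j
    simp only [← Int.cast_smul_eq_zsmul ℝ]
    simp [Matrix.add_apply, Matrix.sum_apply, permMatrix_rotation, permMatrix_reflection, hY]
  rw [key]
  refine add_mem (sum_mem fun u _ => ?_) (sum_mem fun v _ => ?_)
  · exact Submodule.smul_mem _ _ (Submodule.subset_span ⟨_, ⟨_, Or.inl rfl⟩, rfl⟩)
  · exact Submodule.smul_mem _ _ (Submodule.subset_span ⟨_, ⟨_, Or.inr rfl⟩, rfl⟩)

end

theorem exists_finsum_of_mem_intSpan {ι V : Type*} [Finite ι] [AddCommGroup V] [Module ℝ V]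
    (v : ι → V) (s : Set ι) (x : V) (hx : x ∈ Submodule.span ℤ (v '' s)) :
    ∃ a : ι → ℤ, x = ∑ᶠ g ∈ s, (a g : ℝ) • v g := by
  obtain ⟨l, hl, rfl⟩ := (Finsupp.mem_span_image_iff_linearCombination ℤ).1 hx
  refine ⟨l, ?_⟩
  rw [Finsupp.linearCombination_apply, Finsupp.sum]
  simp only [Int.cast_smul_eq_zsmul]
  symm
  refine finsum_mem_eq_sum_of_inter_support_eq _ (Set.ext fun g => ?_)
  simp only [Set.mem_inter_iff, Function.mem_support, Finset.mem_coe, Finsupp.mem_support_iff]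
  refine ⟨fun h => ⟨fun h0 => h.2 (by simp [h0]), h.2⟩, fun h => ⟨hl ?_, h.2⟩⟩
  simpa using h.1

/-- If an integer matrix lies in the real span of `{M(g) − M(e) : g ∈ D_n}`, then it is
an integer linear combination of the matrices `M(g) − M(e)`, `g ∈ D_n`; i.e. the lattice
generated by the vertices of `P(D_n)` has index one in `aff(P(D_n)) ∩ ℤ^{n×n}`. -/
theorem dihedral_lattice_index_one (n : ℕ) (hn : 2 < n) (X : Matrix (Fin n) (Fin n) ℤ)
    (hX : X.map (Int.cast : ℤ → ℝ) ∈
      Submodule.span ℝ ((fun g => permMatrix n g - permMatrix n 1) '' dihedralSet n)) :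
    ∃ a : Equiv.Perm (Fin n) → ℤ,
      X.map (Int.cast : ℤ → ℝ)
        = ∑ᶠ g ∈ dihedralSet n, (a g : ℝ) • (permMatrix n g - permMatrix n 1) := by
  obtain ⟨m, rfl⟩ : ∃ m, n = m + 1 := ⟨n - 1, by omega⟩
  obtain ⟨c, d, hs, hc⟩ := exists_coeff_of_mem_span m _ hX
  simp only [Matrix.map_apply] at hc
  apply exists_finsum_of_mem_intSpan
  have row : ∀ v, (X 0 v : ℝ) = c v + d v := fun v => by simpa using hc 0 v
  -- `X 0 v - ⌊c v⌋` is the integer `d v + fract (c v)`.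
  refine mem_intSpan_of_coeff m _ (fun u => ⌊c u⌋) (fun v => X 0 v - ⌊c v⌋) ?_ fun i j => ?_
  · have h : ((∑ v, X 0 v : ℤ) : ℝ) = 0 := by
      push_cast
      simp only [row, Finset.sum_add_distrib, hs]
    rw [Finset.sum_sub_distrib, add_sub_cancel]
    exact_mod_cast h
  · -- The values of `c` at `j - i` and `i + j` differ by an integer.
    have h : c (j - i) = c (i + j) + ((X i j - X 0 (i + j) : ℤ) : ℝ) := by
      push_cast
      rw [hc i j, row]
      ring
    rw [Matrix.map_apply, h, Int.floor_add_intCast]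
    push_cast
    ring
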